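/- Let A be a real m×n matrix such that the smallest eigenvalue μ of the symmetric positive semidefinite matrix AAᵀ satisfies μ > 0. Let σ > 0, η ≥ 0, and let y, c ∈ ℝ^m satisfy ‖(AAᵀ + σI)y + c‖ ≤ η‖c‖. Then ‖Aᵀy‖ ≤ (1+η)‖c‖/√μ. -/

import Mathlib

/-!
Write `w = Aᵀy` and `r = (AAᵀ + σI)y + c`. Pairing `r - c = (AAᵀ + σI)y` with `y` gives
`‖w‖² + σ‖y‖² = ⟨y, r - c⟩ ≤ ‖y‖ ‖r - c‖ ≤ (1 + η) ‖y‖ ‖c‖`, while the Rayleigh bound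
`μ‖y‖² ≤ ⟨y, AAᵀy⟩ = ‖w‖²` (`dotProduct_mulVec_ge_of_eigenvalues_ge`) gives `√μ ‖y‖ ≤ ‖w‖`.
Multiplying the first inequality by `√μ` and substituting the second yields
`√μ ‖w‖² ≤ (1 + η) ‖w‖ ‖c‖`, and `‖w‖` cancels.
-/

open Matrix

/-- The Euclidean norm of a vector in `ℝ^m`. -/
noncomputable def euclideanNorm {m : ℕ} (v : Fin m → ℝ) : ℝ :=
  Real.sqrt (v ⬝ᵥ v)

theorem euclideanNorm_eq_norm {m : ℕ} (v : Fin m → ℝ) :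
    euclideanNorm v = ‖WithLp.toLp 2 v‖ := by
  rw [euclideanNorm, EuclideanSpace.norm_eq]
  simp [dotProduct, sq]

theorem euclideanNorm_nonneg {m : ℕ} (v : Fin m → ℝ) : 0 ≤ euclideanNorm v :=
  Real.sqrt_nonneg _

theorem euclideanNorm_sq {m : ℕ} (v : Fin m → ℝ) : euclideanNorm v ^ 2 = v ⬝ᵥ v :=
  Real.sq_sqrt (Finset.sum_nonneg fun _ _ => mul_self_nonneg _)

theorem euclideanNorm_sub_le {m : ℕ} (v w : Fin m → ℝ) :
    euclideanNorm (v - w) ≤ euclideanNorm v + euclideanNorm w := by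
  simp only [euclideanNorm_eq_norm, WithLp.toLp_sub]
  exact norm_sub_le _ _

theorem dotProduct_le_euclideanNorm_mul {m : ℕ} (v w : Fin m → ℝ) :
    v ⬝ᵥ w ≤ euclideanNorm v * euclideanNorm w := by
  have h := real_inner_le_norm (WithLp.toLp 2 v) (WithLp.toLp 2 w)
  rw [EuclideanSpace.inner_eq_star_dotProduct] at h
  simpa [euclideanNorm_eq_norm, dotProduct_comm] using h

/-- Rayleigh quotient bound: `M - μI` is positive semidefinite, because its spectrum is that of
`M` shifted by `-μ`. -/
theorem dotProduct_mulVec_ge_of_eigenvalues_ge {m : ℕ} {M : Matrix (Fin m) (Fin m) ℝ}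
    (hM : M.IsHermitian) {μ : ℝ} (hμ : ∀ i, μ ≤ hM.eigenvalues i) (y : Fin m → ℝ) :
    μ * (y ⬝ᵥ y) ≤ y ⬝ᵥ (M *ᵥ y) := by
  have hB : (M - algebraMap ℝ _ μ).IsHermitian := by
    refine hM.sub ?_
    rw [Algebra.algebraMap_eq_smul_one]
    simp [IsHermitian, conjTranspose_smul]
  have hP : (M - algebraMap ℝ _ μ).PosSemidef := by
    rw [hB.posSemidef_iff_eigenvalues_nonneg]
    intro i
    have hi : hB.eigenvalues i ∈ spectrum ℝ (M - algebraMap ℝ _ μ) := by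
      rw [hB.spectrum_real_eq_range_eigenvalues]
      exact ⟨i, rfl⟩
    rw [← spectrum.sub_singleton_eq, hM.spectrum_real_eq_range_eigenvalues] at hi
    obtain ⟨_, ⟨j, rfl⟩, _, rfl, hj⟩ := hi
    rw [← hj]
    exact sub_nonneg.mpr (hμ j)
  have h := hP.dotProduct_mulVec_nonneg y
  rw [Algebra.algebraMap_eq_smul_one, sub_mulVec, smul_mulVec, one_mulVec, dotProduct_sub,
    dotProduct_smul, star_trivial, smul_eq_mul] at h
  linarith

/-- Let `A` be a real `m × n` matrix such that the smallest eigenvalue `μ` of the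
symmetric positive semidefinite matrix `AAᵀ` satisfies `μ > 0`.  Let `σ > 0`, `η ≥ 0`,
and let `y, c ∈ ℝ^m` satisfy `‖(AAᵀ + σI)y + c‖ ≤ η‖c‖`.  Then
`‖Aᵀy‖ ≤ (1+η)‖c‖/√μ`. -/
theorem stmt_5 (m n : ℕ) (A : Matrix (Fin m) (Fin n) ℝ)
    (hH : (A * Aᵀ).IsHermitian)
    (μ : ℝ) (hμ : IsLeast (Set.range hH.eigenvalues) μ) (hμ0 : 0 < μ)
    (σ η : ℝ) (hσ : 0 < σ) (hη : 0 ≤ η) (y c : Fin m → ℝ)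
    (h : euclideanNorm ((A * Aᵀ + σ • (1 : Matrix (Fin m) (Fin m) ℝ)).mulVec y + c)
          ≤ η * euclideanNorm c) :
    euclideanNorm (Aᵀ.mulVec y) ≤ (1 + η) * euclideanNorm c / Real.sqrt μ := by
  have hquad : y ⬝ᵥ ((A * Aᵀ) *ᵥ y) = euclideanNorm (Aᵀ *ᵥ y) ^ 2 := by
    rw [euclideanNorm_sq, ← mulVec_mulVec, dotProduct_mulVec, ← mulVec_transpose]
  have hray := dotProduct_mulVec_ge_of_eigenvalues_ge hH (fun i => hμ.2 ⟨i, rfl⟩) y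
  rw [hquad, ← euclideanNorm_sq] at hray
  set r := (A * Aᵀ + σ • (1 : Matrix (Fin m) (Fin m) ℝ)) *ᵥ y + c with hr
  have hpair : y ⬝ᵥ (r - c) = euclideanNorm (Aᵀ *ᵥ y) ^ 2 + σ * euclideanNorm y ^ 2 := by
    rw [hr, add_sub_cancel_right, add_mulVec, smul_mulVec, one_mulVec, dotProduct_add,
      dotProduct_smul, hquad, euclideanNorm_sq y, smul_eq_mul]
  have hcs := dotProduct_le_euclideanNorm_mul y (r - c)
  have htri := euclideanNorm_sub_le r c
  have hw := euclideanNorm_nonneg (Aᵀ *ᵥ y)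
  have hy := euclideanNorm_nonneg y
  have hc := euclideanNorm_nonneg c
  have hs := Real.sqrt_pos.mpr hμ0
  have hsy : √μ * euclideanNorm y ≤ euclideanNorm (Aᵀ *ᵥ y) := by
    refine abs_le_of_sq_le_sq' ?_ hw |>.2
    rwa [mul_pow, Real.sq_sqrt hμ0.le]
  generalize euclideanNorm (Aᵀ *ᵥ y) = w at *
  have hbound : w ^ 2 ≤ euclideanNorm y * ((1 + η) * euclideanNorm c) := by
    have : euclideanNorm y * euclideanNorm (r - c)
        ≤ euclideanNorm y * ((1 + η) * euclideanNorm c) :=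
      mul_le_mul_of_nonneg_left (by linarith) hy
    have : 0 ≤ σ * euclideanNorm y ^ 2 := by positivity
    linarith
  have hK : 0 ≤ (1 + η) * euclideanNorm c := by positivity
  rw [le_div_iff₀ hs]
  rcases hw.eq_or_lt with h0 | hpos
  · simpa [← h0] using hK
  · refine le_of_mul_le_mul_left ?_ hpos
    calc w * (w * √μ) = √μ * w ^ 2 := by ring
      _ ≤ √μ * (euclideanNorm y * ((1 + η) * euclideanNorm c)) := by gcongr
      _ = (√μ * euclideanNorm y) * ((1 + η) * euclideanNorm c) := by ring
      _ ≤ w * ((1 + η) * euclideanNorm c) := by gcongr
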